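/- Fix x₀ > 0 and L > 3x₀ and let H, θ, λ be the associated critical data. Then for every μ ∈ ℝ and every z ∈ ℝ, the functions u(s) = sin(z·θ(s)) and v(s) = cos(z·θ(s)) satisfy, for all s ∈ (0,2L): (d²/ds²)(2H(s)⁻³·ü(s)) + μ·(d/ds)(2H(s)⁻¹·u̇(s)) + (2−λ)H(s)u(s) = (2z⁴ − (2μ+2−λ)z² + (2−λ))·H(s)·sin(z·θ(s)), and the same identity with u replaced by v and sin(z·θ(s)) replaced by cos(z·θ(s)). In particular, if 2z⁴ − (2μ+2−λ)z² + (2−λ) = 0 then sin(zθ) and cos(zθ) solve the homogeneous equation (2H⁻³u'')'' + μ(2H⁻¹u')' + (2−λ)Hu = 0. -/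

import Mathlib

open Real Set

noncomputable def sig (x0 L : ℝ) : ℝ := π * Real.sqrt (x0 / (L + x0))

noncomputable def kap (x0 L : ℝ) : ℝ := L / Real.sin (sig x0 L)

noncomputable def Hc (x0 L s : ℝ) : ℝ :=
  π / (sig x0 L * Real.sqrt (kap x0 L ^ 2 - (s - L) ^ 2))

/-- the angle function `θ(s) = (π/σ)(arcsin((s−L)/κ) + σ)` -/
noncomputable def th (x0 L s : ℝ) : ℝ :=
  π / sig x0 L * (Real.arcsin ((s - L) / kap x0 L) + sig x0 L)

/-- the fourth order operator `Lu = (2H⁻³ü)'' + μ(2H⁻¹u̇)' + (2−λ)Hu`,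
with `λ = 2L/(L+x₀)` -/
noncomputable def Lop (x0 L μ : ℝ) (u : ℝ → ℝ) (s : ℝ) : ℝ :=
  deriv (deriv fun t => 2 / Hc x0 L t ^ 3 * deriv (deriv u) t) s +
    μ * deriv (fun t => 2 / Hc x0 L t * deriv u t) s +
    (2 - 2 * L / (L + x0)) * Hc x0 L s * u s

theorem sig_facts (x0 L : ℝ) (hx0 : 0 < x0) (hL : 3 * x0 < L) :
    0 < sig x0 L ∧ sig x0 L < π ∧ sig x0 L ^ 2 = π ^ 2 * (x0 / (L + x0)) := by
  have h0 : 0 < L + x0 := by linarith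
  have h1 : 0 < x0 / (L + x0) := by positivity
  have h2 : x0 / (L + x0) < 1 := by rw [div_lt_one h0]; linarith
  have hp := Real.pi_pos
  have hs : Real.sqrt (x0 / (L + x0)) < 1 := by
    rw [Real.sqrt_lt' one_pos]; linarith
  refine ⟨?_, ?_, ?_⟩
  · unfold sig
    have := Real.sqrt_pos.mpr h1
    positivity
  · unfold sig
    nlinarith
  · unfold sig
    rw [mul_pow, Real.sq_sqrt h1.le]

theorem kap_ge (x0 L : ℝ) (hx0 : 0 < x0) (hL : 3 * x0 < L) : L ≤ kap x0 L := by
  obtain ⟨h1, h2, -⟩ := sig_facts x0 L hx0 hL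
  have h3 := Real.sin_pos_of_pos_of_lt_pi h1 h2
  have h4 := Real.sin_le_one (sig x0 L)
  unfold kap
  rw [le_div_iff₀ h3]
  nlinarith

theorem rad_pos (x0 L s : ℝ) (hx0 : 0 < x0) (hL : 3 * x0 < L) (hs : s ∈ Set.Ioo (0:ℝ) (2 * L)) :
    0 < kap x0 L ^ 2 - (s - L) ^ 2 := by
  have h := kap_ge x0 L hx0 hL
  obtain ⟨a, b⟩ := hs
  nlinarith

theorem th_deriv (x0 L s : ℝ) (hx0 : 0 < x0) (hL : 3 * x0 < L) (hs : s ∈ Set.Ioo (0:ℝ) (2 * L)) :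
    HasDerivAt (th x0 L)
      (π / sig x0 L / Real.sqrt (kap x0 L ^ 2 - (s - L) ^ 2)) s := by
  have hr := rad_pos x0 L s hx0 hL hs
  have hk : 0 < kap x0 L := by have := kap_ge x0 L hx0 hL; linarith
  have hlt : ((s - L) / kap x0 L) ^ 2 < 1 := by
    rw [div_pow, div_lt_one (by positivity)]; linarith
  have hab := abs_lt.mp ((sq_lt_one_iff_abs_lt_one _).mp hlt)
  have h1 : HasDerivAt (fun t : ℝ => (t - L) / kap x0 L) (1 / kap x0 L) s :=
    ((hasDerivAt_id s).sub_const L).div_const _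
  have h2 := (Real.hasDerivAt_arcsin (ne_of_gt hab.1) (ne_of_lt hab.2)).comp s h1
  have h3 := (h2.add_const (sig x0 L)).const_mul (π / sig x0 L)
  have e : Real.sqrt (1 - ((s - L) / kap x0 L) ^ 2)
      = Real.sqrt (kap x0 L ^ 2 - (s - L) ^ 2) / kap x0 L := by
    have e1 : 1 - ((s - L) / kap x0 L) ^ 2
        = (kap x0 L ^ 2 - (s - L) ^ 2) / kap x0 L ^ 2 := by field_simp
    rw [e1, Real.sqrt_div hr.le, Real.sqrt_sq hk.le]
  have hw := Real.sqrt_pos.mpr hr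
  refine h3.congr_deriv ?_
  rw [e]
  field_simp

theorem w_deriv (k L s : ℝ) (hr : 0 < k ^ 2 - (s - L) ^ 2) :
    HasDerivAt (fun t : ℝ => Real.sqrt (k ^ 2 - (t - L) ^ 2))
      (-(s - L) / Real.sqrt (k ^ 2 - (s - L) ^ 2)) s := by
  have h1 := (((hasDerivAt_id s).sub_const L).pow 2).const_sub (k ^ 2)
  have h2 := h1.sqrt hr.ne'
  refine h2.congr_deriv ?_
  have hw := Real.sqrt_pos.mpr hr
  simp only [id, Pi.pow_apply]
  field_simp
  simp
  ring

theorem Lop_gen (x0 L μ z : ℝ) (hx0 : 0 < x0) (hL : 3 * x0 < L) (f g : ℝ → ℝ)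
    (hf : ∀ x, HasDerivAt f (g x) x) (hg : ∀ x, HasDerivAt g (-f x) x)
    (s : ℝ) (hs : s ∈ Set.Ioo (0:ℝ) (2 * L)) :
    Lop x0 L μ (fun r => f (z * th x0 L r)) s =
      (2 * z ^ 4 - (2 * μ + 2 - 2 * L / (L + x0)) * z ^ 2 + (2 - 2 * L / (L + x0))) *
        Hc x0 L s * f (z * th x0 L s) := by
  obtain ⟨hσ, -, hσ2⟩ := sig_facts x0 L hx0 hL
  have hp := Real.pi_pos
  obtain ⟨c, hc⟩ : ∃ c, c = π / sig x0 L := ⟨_, rfl⟩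
  have hc0 : 0 < c := by rw [hc]; positivity
  have hlam : 2 - 2 * L / (L + x0) = 2 / c ^ 2 := by
    have h0 : 0 < L + x0 := by linarith
    rw [hc, div_pow, hσ2]
    field_simp
    ring
  obtain ⟨w, hw⟩ : ∃ w : ℝ → ℝ, w = fun t => Real.sqrt (kap x0 L ^ 2 - (t - L) ^ 2) := ⟨_, rfl⟩
  have hwpos : ∀ t ∈ Set.Ioo (0:ℝ) (2 * L), 0 < w t := fun t ht => by
    rw [hw]; exact Real.sqrt_pos.mpr (rad_pos x0 L t hx0 hL ht)
  have hwd : ∀ t ∈ Set.Ioo (0:ℝ) (2 * L), HasDerivAt w (-(t - L) / w t) t := fun t ht => by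
    rw [hw]; exact w_deriv _ _ _ (rad_pos x0 L t hx0 hL ht)
  have hH : ∀ t, Hc x0 L t = c / w t := fun t => by
    rw [hc, hw]; simp only [Hc]; rw [div_div]
  have hθ : ∀ t ∈ Set.Ioo (0:ℝ) (2 * L), HasDerivAt (fun r => z * th x0 L r) (z * (c / w t)) t :=
    fun t ht => by
      rw [hc, hw]; exact (th_deriv x0 L t hx0 hL ht).const_mul z
  have hF : ∀ t ∈ Set.Ioo (0:ℝ) (2 * L), HasDerivAt (fun r => f (z * th x0 L r))
      (g (z * th x0 L t) * (z * (c / w t))) t := fun t ht => (hf _).comp t (hθ t ht)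
  have hG : ∀ t ∈ Set.Ioo (0:ℝ) (2 * L), HasDerivAt (fun r => g (z * th x0 L r))
      (-f (z * th x0 L t) * (z * (c / w t))) t := fun t ht => (hg _).comp t (hθ t ht)
  have nh : ∀ t ∈ Set.Ioo (0:ℝ) (2 * L), Set.Ioo (0:ℝ) (2 * L) ∈ nhds t :=
    fun t ht => isOpen_Ioo.mem_nhds ht
  have hU2 : ∀ t ∈ Set.Ioo (0:ℝ) (2 * L), deriv (deriv (fun r => f (z * th x0 L r))) t =
      -z ^ 2 * c ^ 2 / w t ^ 2 * f (z * th x0 L t)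
        + z * c * (t - L) / w t ^ 3 * g (z * th x0 L t) := fun t ht => by
    have e : deriv (fun r => f (z * th x0 L r)) =ᶠ[nhds t]
        fun t => g (z * th x0 L t) * (z * (c / w t)) := by
      filter_upwards [nh t ht] with r hr using (hF r hr).deriv
    have w0 := (hwpos t ht).ne'
    rw [e.deriv_eq]
    refine ((hG t ht).mul (((hasDerivAt_const t c).div (hwd t ht) w0).const_mul z)).deriv.trans ?_
    simp only [Pi.div_apply]
    field_simp
    ring
  have hA1 : ∀ t ∈ Set.Ioo (0:ℝ) (2 * L),
      deriv (fun t => 2 / Hc x0 L t ^ 3 * deriv (deriv (fun r => f (z * th x0 L r))) t) t =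
      (2 * z / c ^ 2 - 2 * z ^ 3) * g (z * th x0 L t) := fun t ht => by
    have e : (fun t => 2 / Hc x0 L t ^ 3 * deriv (deriv (fun r => f (z * th x0 L r))) t)
        =ᶠ[nhds t] fun t => (-2 * z ^ 2 / c) * (w t * f (z * th x0 L t))
          + (2 * z / c ^ 2) * ((t - L) * g (z * th x0 L t)) := by
      filter_upwards [nh t ht] with r hr
      have w0 := (hwpos r hr).ne'
      rw [hU2 r hr, hH]
      field_simp
    have w0 := (hwpos t ht).ne'
    rw [e.deriv_eq]
    refine ((((hwd t ht).mul (hF t ht)).const_mul (-2 * z ^ 2 / c)).add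
      ((((hasDerivAt_id t).sub_const L).mul (hG t ht)).const_mul (2 * z / c ^ 2))).deriv.trans ?_
    simp only [id]
    field_simp
    ring
  have hA2 : deriv (deriv
      fun t => 2 / Hc x0 L t ^ 3 * deriv (deriv (fun r => f (z * th x0 L r))) t) s =
      (2 * z / c ^ 2 - 2 * z ^ 3) * (-f (z * th x0 L s) * (z * (c / w s))) := by
    have e : deriv (fun t => 2 / Hc x0 L t ^ 3 * deriv (deriv (fun r => f (z * th x0 L r))) t)
        =ᶠ[nhds s] fun t => (2 * z / c ^ 2 - 2 * z ^ 3) * g (z * th x0 L t) := by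
      filter_upwards [nh s hs] with r hr using hA1 r hr
    rw [e.deriv_eq, ((hG s hs).const_mul _).deriv]
  have hB : deriv (fun t => 2 / Hc x0 L t * deriv (fun r => f (z * th x0 L r)) t) s =
      2 * z * (-f (z * th x0 L s) * (z * (c / w s))) := by
    have e : (fun t => 2 / Hc x0 L t * deriv (fun r => f (z * th x0 L r)) t)
        =ᶠ[nhds s] fun t => (2 * z) * g (z * th x0 L t) := by
      filter_upwards [nh s hs] with r hr
      have w0 := (hwpos r hr).ne'
      rw [(hF r hr).deriv, hH]
      field_simp
    rw [e.deriv_eq, ((hG s hs).const_mul _).deriv]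
  have hl2 : 2 * μ + 2 - 2 * L / (L + x0) = 2 * μ + 2 / c ^ 2 := by rw [← hlam]; ring
  unfold Lop
  rw [hA2, hB, hl2, hlam, hH]
  ring

/-- action of the stability operator on `sin(zθ)` and `cos(zθ)`. -/
theorem statement13 (x0 L μ z : ℝ) (hx0 : 0 < x0) (hL : 3 * x0 < L) :
    (∀ s ∈ Set.Ioo (0:ℝ) (2 * L),
        Lop x0 L μ (fun r => Real.sin (z * th x0 L r)) s =
          (2 * z ^ 4 - (2 * μ + 2 - 2 * L / (L + x0)) * z ^ 2 + (2 - 2 * L / (L + x0))) *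
            Hc x0 L s * Real.sin (z * th x0 L s)) ∧
    (∀ s ∈ Set.Ioo (0:ℝ) (2 * L),
        Lop x0 L μ (fun r => Real.cos (z * th x0 L r)) s =
          (2 * z ^ 4 - (2 * μ + 2 - 2 * L / (L + x0)) * z ^ 2 + (2 - 2 * L / (L + x0))) *
            Hc x0 L s * Real.cos (z * th x0 L s)) ∧
    (2 * z ^ 4 - (2 * μ + 2 - 2 * L / (L + x0)) * z ^ 2 + (2 - 2 * L / (L + x0)) = 0 →
      (∀ s ∈ Set.Ioo (0:ℝ) (2 * L),
          Lop x0 L μ (fun r => Real.sin (z * th x0 L r)) s = 0) ∧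
      (∀ s ∈ Set.Ioo (0:ℝ) (2 * L),
          Lop x0 L μ (fun r => Real.cos (z * th x0 L r)) s = 0)) := by
  have hS := Lop_gen x0 L μ z hx0 hL Real.sin Real.cos Real.hasDerivAt_sin Real.hasDerivAt_cos
  have hC := Lop_gen x0 L μ z hx0 hL Real.cos (fun x => -Real.sin x) Real.hasDerivAt_cos
    (fun x => (Real.hasDerivAt_sin x).neg)
  refine ⟨hS, hC, fun h => ⟨fun s hs => ?_, fun s hs => ?_⟩⟩
  · rw [hS s hs, h]; ring
  · rw [hC s hs, h]; ring
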